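/- arXiv:1905.04202 — 2 statements merged into one kernel-verified Lean document; each statement's English description precedes it below -/
import Mathlib

section
/- There is no monic polynomial of degree 8 with zero x^7 coefficient and zero constant term that is a permutation polynomial over F_37. -/
/-! Strategy: Hermite's criterion (power sums of order 5 and 6) gives `a4 = -2 a6 ^ 2` and an equation
which is linear in `a1`.  Scaling the variable reduces `(a6, a5)` to 42 representatives, and the
remaining polynomials are checked by a kernel computation that looks for two equal values. -/

namespace PP37

/-- Evaluate the natural number `x` before passing it on. -/
noncomputable def force (x : ℕ) (k : ℕ → Bool) : Bool :=
  Nat.rec (motive := fun _ => Bool) (k 0) (fun n _ => k (Nat.succ n)) x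

theorem force_eq (x : ℕ) (k : ℕ → Bool) : force x k = k x := by
  cases x <;> rfl

/-- Bounded universal quantifier. -/
noncomputable def allB (n : ℕ) (p : ℕ → Bool) : Bool :=
  Nat.rec (motive := fun _ => Bool) true (fun i ih => cond (p i) ih false) n

theorem allB_spec (n : ℕ) (p : ℕ → Bool) (h : allB n p = true) : ∀ i < n, p i = true := by
  induction n with
  | zero => intro i hi; omega
  | succ n ih =>
    have h' : cond (p n) (allB n p) false = true := h
    cases hp : p n with
    | false => rw [hp] at h'; simp at h'
    | true =>
      rw [hp] at h'
      intro i hi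
      rcases Nat.lt_succ_iff_lt_or_eq.mp hi with h1 | h1
      · exact ih h' i h1
      · rw [h1, hp]

theorem add_n (x y : ℕ) : Nat.add x y = x + y := rfl
theorem mul_n (x y : ℕ) : Nat.mul x y = x * y := rfl
theorem sub_n (x y : ℕ) : Nat.sub x y = x - y := rfl
theorem mod_n (x y : ℕ) : Nat.mod x y = x % y := rfl
theorem div_n (x y : ℕ) : Nat.div x y = x / y := rfl
theorem lor_n (x y : ℕ) : Nat.lor x y = x ||| y := rfl
theorem pow_n (x y : ℕ) : Nat.pow x y = x ^ y := rfl
theorem shr_n (x y : ℕ) : Nat.shiftRight x y = x >>> y := rfl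

/-- Search for a repeated value (mod 37) among the base-65536 digits of `V`. -/
noncomputable def scan (n : ℕ) : ℕ → ℕ → Bool :=
  Nat.rec (motive := fun _ => ℕ → ℕ → Bool) (fun _ _ => false)
    (fun _ ih V m =>
      force V fun V =>
      force (Nat.mod (Nat.mod V 65536) 37) fun r =>
      cond (Nat.beq (Nat.mod (Nat.shiftRight m r) 2) 1) true
        (force (Nat.lor m (Nat.pow 2 r)) fun m' => ih (Nat.div V 65536) m')) n

theorem scan_succ (n V m : ℕ) : scan (n + 1) V m =
    cond (Nat.beq ((m >>> (V % 65536 % 37)) % 2) 1) true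
      (scan n (V / 65536) (m ||| 2 ^ (V % 65536 % 37))) := by
  have h : scan (n + 1) V m =
      force V fun V =>
      force (Nat.mod (Nat.mod V 65536) 37) fun r =>
      cond (Nat.beq (Nat.mod (Nat.shiftRight m r) 2) 1) true
        (force (Nat.lor m (Nat.pow 2 r)) fun m' => scan n (Nat.div V 65536) m') := rfl
  rw [h]
  simp only [force_eq, mod_n, div_n, lor_n, pow_n, shr_n]

/-- Packed values. -/
def pack (v : ℕ → ℕ) : ℕ → ℕ → ℕ
  | 0, _ => 0
  | n + 1, x => v x + 65536 * pack v n (x + 1)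

theorem pack_add (u v : ℕ → ℕ) (n x : ℕ) :
    pack (fun x => u x + v x) n x = pack u n x + pack v n x := by
  induction n generalizing x with
  | zero => rfl
  | succ n ih => simp only [pack, ih]; ring

theorem pack_mul (k : ℕ) (v : ℕ → ℕ) (n x : ℕ) :
    pack (fun x => k * v x) n x = k * pack v n x := by
  induction n generalizing x with
  | zero => rfl
  | succ n ih => simp only [pack, ih]; ring

theorem scan_sound (v : ℕ → ℕ) (hv : ∀ x, v x < 65536) (n : ℕ) : ∀ (x m : ℕ),
    (∀ r, m.testBit r = true → ∃ i < x, v i % 37 = r) →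
    scan n (pack v n x) m = true → ∃ i j, i < j ∧ j < x + n ∧ v i % 37 = v j % 37 := by
  induction n with
  | zero => intro x m _ h; exact absurd h (by simp [scan])
  | succ n ih =>
    intro x m hm h
    have hvx := hv x
    have e1 : pack v (n + 1) x % 65536 = v x := by simp only [pack]; omega
    have e2 : pack v (n + 1) x / 65536 = pack v n (x + 1) := by simp only [pack]; omega
    rw [scan_succ, e1, e2] at h
    cases hb : Nat.beq ((m >>> (v x % 37)) % 2) 1 with
    | true =>
      have h1 := Nat.eq_of_beq_eq_true hb
      have h2 : m.testBit (v x % 37) = true := by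
        rw [Nat.testBit_eq_decide_div_mod_eq, ← Nat.shiftRight_eq_div_pow]
        exact decide_eq_true h1
      obtain ⟨i, hi, hi2⟩ := hm _ h2
      exact ⟨i, x, hi, by omega, hi2⟩
    | false =>
      rw [hb] at h
      obtain ⟨i, j, h1, h2, h3⟩ := ih (x + 1) (m ||| 2 ^ (v x % 37)) (by
        intro r hr
        rw [Nat.testBit_or, Nat.testBit_two_pow] at hr
        rcases Bool.or_eq_true_iff.mp hr with h4 | h4
        · obtain ⟨i, hi, hi2⟩ := hm _ h4
          exact ⟨i, by omega, hi2⟩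
        · exact ⟨x, by omega, by simpa using h4⟩) h
      exact ⟨i, j, h1, by omega, h3⟩

/-- Integer representatives of the values of the polynomial. -/
def val (a b q c d e x : ℕ) : ℕ :=
  x ^ 8 % 37 + a * (x ^ 6 % 37) + b * (x ^ 5 % 37) + q * (x ^ 4 % 37) + c * (x ^ 3 % 37)
    + d * (x ^ 2 % 37) + e * (x ^ 1 % 37)

def P8 : ℕ := 247458716886589533769743300253434165379829351837860313525252878954768082924246513746147002020458882359664275195170224729447146928699187007675567772477737187895551870554406912
def P6 : ℕ := 247432299955836072695094966301216059976641088217587601929331641052997984626527136912480612772197305794766402129405421182691035517649111437731343413999732149109858763842584576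
def P5 : ℕ := 8903913323765275423604667045176888648237718593252613512548389852861219984445343921206300507136386122685002563101470946019262588829351719267975290070987548801447652943745581056
def P4 : ℕ := 247390785275034230755083536584284492308955737981444336275539407668359179699594599454425814204462580689671518203219593075981851282787153074302768848948607950814960016766861312
def P3 : ℕ := 8904003898517952803828220675964776797893940718483047508354603438210577209543963025389074846438734453341875279214617336238811376253841232864761550689944537564592790688833273856
def P2 : ℕ := 247345497841092748798098221441336424667166023255260422937110795207578978639123327434671667694066486378962690390377383450137596021855003284853068078733069642830778227899826176
def P1 : ℕ := 8904026543674588260844990864658335616649875213513361543990370774401444017301780105791849101402484895000801458246280108978490138878768550279082055206031964887355327720026341376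

theorem pack_val (a b q c d e : ℕ) : pack (val a b q c d e) 37 0 =
    P8 + a * P6 + b * P5 + q * P4 + c * P3 + d * P2 + e * P1 := by
  have h8 : pack (fun x => x ^ 8 % 37) 37 0 = P8 := by decide +kernel
  have h6 : pack (fun x => x ^ 6 % 37) 37 0 = P6 := by decide +kernel
  have h5 : pack (fun x => x ^ 5 % 37) 37 0 = P5 := by decide +kernel
  have h4 : pack (fun x => x ^ 4 % 37) 37 0 = P4 := by decide +kernel
  have h3 : pack (fun x => x ^ 3 % 37) 37 0 = P3 := by decide +kernel
  have h2 : pack (fun x => x ^ 2 % 37) 37 0 = P2 := by decide +kernel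
  have h1 : pack (fun x => x ^ 1 % 37) 37 0 = P1 := by decide +kernel
  rw [← h8, ← h6, ← h5, ← h4, ← h3, ← h2, ← h1]
  simp only [← pack_mul, ← pack_add]
  rfl

/-- Coefficient of `a1` in the sixth power sum. -/
def Dc (a b c : ℕ) : ℕ := (30 * c + 120 * a * b) % 37
/-- Coefficient of `a2` in the sixth power sum. -/
def N1 (a b q : ℕ) : ℕ := (60 * b ^ 2 + 120 * a * q + 60 * a ^ 3) % 37
/-- Constant part of the sixth power sum. -/
def N0 (a b q c : ℕ) : ℕ :=
  (20 * q ^ 3 + 120 * b * q * c + 15 * b ^ 4 + 60 * a * c ^ 2 + 180 * a * b ^ 2 * q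
    + 90 * a ^ 2 * q ^ 2 + 180 * a ^ 2 * b * c + 60 * a ^ 3 * b ^ 2 + 30 * a ^ 4 * q + a ^ 6) % 37

/-- All polynomials with the given `a6 = a`, `a5 = b`. -/
noncomputable def row (a b : ℕ) : Bool :=
  force (35 * a ^ 2 % 37) fun q =>
  force (N1 a b q) fun n1 =>
  force (P8 + a * P6 + b * P5 + q * P4) fun U =>
  allB 37 fun c =>
  force (Dc a b c) fun D =>
  force (D ^ 35 % 37) fun D' =>
  force (N0 a b q c) fun n0 =>
  force (U + c * P3) fun U' =>
  allB 37 fun d =>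
  force (Nat.mod (Nat.add (Nat.mul (Nat.add (Nat.mul 15 d) n1) d) n0) 37) fun N =>
  cond (Nat.beq D 0)
    (cond (Nat.beq N 0) (allB 37 fun e =>
      scan 37 (Nat.add (Nat.add U' (Nat.mul d P2)) (Nat.mul e P1)) 0) true)
    (scan 37 (Nat.add (Nat.add U' (Nat.mul d P2))
      (Nat.mul (Nat.mod (Nat.mul (Nat.sub 37 N) D') 37) P1)) 0)

theorem fact37 : Fact (Nat.Prime 37) := ⟨by norm_num⟩

attribute [local instance] fact37

theorem row_sound (a b : ℕ) (ha : a < 37) (hb : b < 37) (h : row a b = true)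
    (c d e q : ℕ) (hc : c < 37) (hd : d < 37) (he : e < 37) (hq : q = 35 * a ^ 2 % 37)
    (H : (Dc a b c * e + ((15 * d + N1 a b q) * d + N0 a b q c) % 37) % 37 = 0) :
    ∃ i j, i < j ∧ j < 37 ∧ val a b q c d e i % 37 = val a b q c d e j % 37 := by
  have hq' : q < 37 := by omega
  have key : scan 37 (P8 + a * P6 + b * P5 + q * P4 + c * P3 + d * P2 + e * P1) 0 = true →
      ∃ i j, i < j ∧ j < 37 ∧ val a b q c d e i % 37 = val a b q c d e j % 37 := by
    intro hs
    rw [← pack_val] at hs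
    obtain ⟨i, j, h1, h2, h3⟩ := scan_sound (val a b q c d e) (by
      intro x
      have bd : ∀ k n, k < 37 → k * (x ^ n % 37) ≤ 36 * 36 := fun k n hk =>
        Nat.mul_le_mul (by omega) (by omega)
      have b6 := bd a 6 ha
      have b5 := bd b 5 hb
      have b4 := bd q 4 hq'
      have b3 := bd c 3 hc
      have b2 := bd d 2 hd
      have b1 := bd e 1 he
      unfold val
      omega) 37 0 0 (by simp) hs
    exact ⟨i, j, h1, by omega, h3⟩
  unfold row at h
  rw [force_eq, ← hq, force_eq, force_eq] at h
  have h1 := allB_spec _ _ h c hc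
  simp only [force_eq, add_n, mul_n, sub_n, mod_n] at h1
  have h2 := allB_spec _ _ h1 d hd
  clear h h1
  beta_reduce at h2
  have hN : ((15 * d + N1 a b q) * d + N0 a b q c) % 37 < 37 := Nat.mod_lt _ (by norm_num)
  have hD : Dc a b c < 37 := Nat.mod_lt _ (by norm_num)
  generalize ((15 * d + N1 a b q) * d + N0 a b q c) % 37 = N at *
  generalize Dc a b c = D at *
  apply key
  cases hD0 : Nat.beq D 0 with
  | true =>
    have hD1 := Nat.eq_of_beq_eq_true hD0
    have hN0 : N = 0 := by rw [hD1, zero_mul] at H; omega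
    have hN1 : Nat.beq N 0 = true := by rw [hN0]; rfl
    rw [hD0, cond_true, hN1, cond_true] at h2
    have h3 := allB_spec _ _ h2 e he
    beta_reduce at h3
    exact h3
  | false =>
    rw [hD0, cond_false] at h2
    have hDne : D ≠ 0 := by
      rintro rfl
      exact absurd hD0 (by decide)
    have hz : (D : ZMod 37) ≠ 0 := by
      rw [Ne, ZMod.natCast_eq_zero_iff]
      intro hdv
      exact absurd (Nat.le_of_dvd (by omega) hdv) (by omega)
    have hf : (D : ZMod 37) ^ 36 = 1 := ZMod.pow_card_sub_one_eq_one hz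
    have hH : (D : ZMod 37) * e + N = 0 := by
      have := (ZMod.natCast_eq_zero_iff (D * e + N) 37).mpr (Nat.dvd_of_mod_eq_zero H)
      exact_mod_cast this
    have he2 : ((37 - N) * (D ^ 35 % 37) % 37 : ℕ) = e := by
      have h37 : ((37 : ℕ) : ZMod 37) = 0 := ZMod.natCast_self 37
      have : (((37 - N) * (D ^ 35 % 37) : ℕ) : ZMod 37) = (e : ℕ) := by
        rw [Nat.cast_mul, ZMod.natCast_mod, Nat.cast_sub hN.le, h37, Nat.cast_pow]
        linear_combination (-(D : ZMod 37) ^ 35) * hH + (e : ZMod 37) * hf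
      have h5 := (ZMod.natCast_eq_natCast_iff' _ _ _).mp this
      rw [h5, Nat.mod_eq_of_lt he]
    rw [he2] at h2
    exact h2

theorem rows0 : allB 4 (row 0) = true := by decide +kernel
theorem rows1 : allB 19 (row 1) = true := by decide +kernel
theorem rows2 : allB 19 (row 2) = true := by decide +kernel

theorem reps : ∀ a b : ZMod 37, ∃ s : ZMod 37, s ≠ 0 ∧
    ((a * (s * s) = 0 ∧ (b * (s * s * s)).val < 4) ∨
      ((a * (s * s) = 1 ∨ a * (s * s) = 2) ∧ (b * (s * s * s)).val < 19)) := by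
  decide +kernel

open Polynomial in
theorem sum_eval (p : (ZMod 37)[X]) (hp : p.natDegree < 72) :
    ∑ x : ZMod 37, p.eval x = - p.coeff 36 := by
  have hS : ∀ j < 72, ∑ x : ZMod 37, x ^ j = if j = 36 then -1 else 0 := by
    decide +kernel
  simp_rw [eval_eq_sum_range' hp]
  rw [Finset.sum_comm]
  simp_rw [← Finset.mul_sum]
  rw [Finset.sum_congr rfl (fun j hj => by rw [hS j (Finset.mem_range.mp hj)])]
  simp

/-- The value of the normalized polynomial. -/
def ev (a b q c d e x : ZMod 37) : ZMod 37 :=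
  x ^ 8 + a * x ^ 6 + b * x ^ 5 + q * x ^ 4 + c * x ^ 3 + d * x ^ 2 + e * x

open Polynomial in
set_option maxHeartbeats 4000000 in
set_option linter.unusedSimpArgs false in
theorem hermite (a b q c d e : ZMod 37) (h : Function.Injective (ev a b q c d e)) :
    q = -2 * a ^ 2 ∧
    15 * d ^ 2 + 30 * c * e + 20 * q ^ 3 + 120 * b * q * c + 60 * b ^ 2 * d + 15 * b ^ 4
      + 60 * a * c ^ 2 + 120 * a * q * d + 120 * a * b * e + 180 * a * b ^ 2 * q
      + 90 * a ^ 2 * q ^ 2 + 180 * a ^ 2 * b * c + 60 * a ^ 3 * d + 60 * a ^ 3 * b ^ 2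
      + 30 * a ^ 4 * q + a ^ 6 = 0 := by
  obtain ⟨f, hf⟩ : ∃ f : (ZMod 37)[X], f = X ^ 8 + C a * X ^ 6 + C b * X ^ 5 + C q * X ^ 4
      + C c * X ^ 3 + C d * X ^ 2 + C e * X := ⟨_, rfl⟩
  have hdeg : f.natDegree ≤ 8 := by rw [hf]; compute_degree
  have hev : ∀ x, f.eval x = ev a b q c d e x := by intro x; rw [hf]; simp [ev]
  have hz : ∀ n, 8 < n → f.coeff n = 0 := fun n hn =>
    coeff_eq_zero_of_natDegree_lt (by omega)
  have c0 : f.coeff 0 = 0 := by rw [hf]; simp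
  have c1 : f.coeff 1 = e := by rw [hf]; simp [coeff_X_pow]
  have c2 : f.coeff 2 = d := by rw [hf]; simp [coeff_X_pow, coeff_X]
  have c3 : f.coeff 3 = c := by rw [hf]; simp [coeff_X_pow, coeff_X]
  have c4 : f.coeff 4 = q := by rw [hf]; simp [coeff_X_pow, coeff_X]
  have c5 : f.coeff 5 = b := by rw [hf]; simp [coeff_X_pow, coeff_X]
  have c6 : f.coeff 6 = a := by rw [hf]; simp [coeff_X_pow, coeff_X]
  have c7 : f.coeff 7 = 0 := by rw [hf]; simp [coeff_X_pow, coeff_X]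
  have c8 : f.coeff 8 = 1 := by rw [hf]; simp [coeff_X_pow, coeff_X]
  clear hf
  have hbij : Function.Bijective (ev a b q c d e) := Finite.injective_iff_bijective.mp h
  have hsum : ∀ k, k < 9 → 0 < k → (f ^ k).coeff 36 = 0 := by
    intro k hk hk0
    have h1 := sum_eval (f ^ k) (lt_of_le_of_lt natDegree_pow_le (by nlinarith))
    simp only [eval_pow, hev] at h1
    have h2 : ∑ x, (ev a b q c d e x) ^ k = ∑ y : ZMod 37, y ^ k :=
      hbij.sum_comp (fun y => y ^ k)
    rw [h2, FiniteField.sum_pow_lt_card_sub_one (ZMod 37) k (by rw [ZMod.card]; omega)] at h1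
    exact neg_eq_zero.mp h1.symm
  have hmul : ∀ (u v : (ZMod 37)[X]) (n : ℕ), (u * v).coeff n =
      ∑ i ∈ Finset.range (n + 1), u.coeff i * v.coeff (n - i) := by
    intro u v n
    rw [coeff_mul, Finset.Nat.sum_antidiagonal_eq_sum_range_succ_mk]
  have hm2 : ∀ n, (f ^ 2).coeff n = ∑ i ∈ Finset.range (n + 1), f.coeff i * f.coeff (n - i) := by
    intro n; rw [pow_two, hmul]
  have hm3 : ∀ n, (f ^ 3).coeff n =
      ∑ i ∈ Finset.range (n + 1), (f ^ 2).coeff i * f.coeff (n - i) := by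
    intro n; rw [pow_succ, hmul]
  have z2 : ∀ n, 16 < n → (f ^ 2).coeff n = 0 := fun n hn =>
    coeff_eq_zero_of_natDegree_lt (lt_of_le_of_lt natDegree_pow_le (by omega))
  have z3 : ∀ n, 24 < n → (f ^ 3).coeff n = 0 := fun n hn =>
    coeff_eq_zero_of_natDegree_lt (lt_of_le_of_lt natDegree_pow_le (by omega))
  -- coefficients of the square
  have s0 : (f ^ 2).coeff 0 = 0 := by
    rw [hm2]; simp [Finset.sum_range_succ, hz, c0, c1, c2, c3, c4, c5, c6, c7, c8]
  have s1 : (f ^ 2).coeff 1 = 0 := by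
    rw [hm2]; simp [Finset.sum_range_succ, hz, c0, c1, c2, c3, c4, c5, c6, c7, c8]
  have s2 : (f ^ 2).coeff 2 = e * e := by
    rw [hm2]; simp [Finset.sum_range_succ, hz, c0, c1, c2, c3, c4, c5, c6, c7, c8]
  have s3 : (f ^ 2).coeff 3 = 2 * d * e := by
    rw [hm2]; simp [Finset.sum_range_succ, hz, c0, c1, c2, c3, c4, c5, c6, c7, c8]; ring
  have s4 : (f ^ 2).coeff 4 = 2 * c * e + d * d := by
    rw [hm2]; simp [Finset.sum_range_succ, hz, c0, c1, c2, c3, c4, c5, c6, c7, c8]; ring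
  have s5 : (f ^ 2).coeff 5 = 2 * e * q + 2 * c * d := by
    rw [hm2]; simp [Finset.sum_range_succ, hz, c0, c1, c2, c3, c4, c5, c6, c7, c8]; ring
  have s6 : (f ^ 2).coeff 6 = 2 * b * e + 2 * d * q + c * c := by
    rw [hm2]; simp [Finset.sum_range_succ, hz, c0, c1, c2, c3, c4, c5, c6, c7, c8]; ring
  have s7 : (f ^ 2).coeff 7 = 2 * a * e + 2 * b * d + 2 * c * q := by
    rw [hm2]; simp [Finset.sum_range_succ, hz, c0, c1, c2, c3, c4, c5, c6, c7, c8]; ring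
  have s8 : (f ^ 2).coeff 8 = 2 * a * d + 2 * b * c + q * q := by
    rw [hm2]; simp [Finset.sum_range_succ, hz, c0, c1, c2, c3, c4, c5, c6, c7, c8]; ring
  have s9 : (f ^ 2).coeff 9 = 2 * e + 2 * a * c + 2 * b * q := by
    rw [hm2]; simp [Finset.sum_range_succ, hz, c0, c1, c2, c3, c4, c5, c6, c7, c8]; ring
  have s10 : (f ^ 2).coeff 10 = 2 * d + 2 * a * q + b * b := by
    rw [hm2]; simp [Finset.sum_range_succ, hz, c0, c1, c2, c3, c4, c5, c6, c7, c8]; ring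
  have s11 : (f ^ 2).coeff 11 = 2 * c + 2 * a * b := by
    rw [hm2]; simp [Finset.sum_range_succ, hz, c0, c1, c2, c3, c4, c5, c6, c7, c8]; ring
  have s12 : (f ^ 2).coeff 12 = 2 * q + a * a := by
    rw [hm2]; simp [Finset.sum_range_succ, hz, c0, c1, c2, c3, c4, c5, c6, c7, c8]; ring
  have s13 : (f ^ 2).coeff 13 = 2 * b := by
    rw [hm2]; simp [Finset.sum_range_succ, hz, c0, c1, c2, c3, c4, c5, c6, c7, c8]; ring
  have s14 : (f ^ 2).coeff 14 = 2 * a := by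
    rw [hm2]; simp [Finset.sum_range_succ, hz, c0, c1, c2, c3, c4, c5, c6, c7, c8]; ring
  have s15 : (f ^ 2).coeff 15 = 0 := by
    rw [hm2]; simp [Finset.sum_range_succ, hz, c0, c1, c2, c3, c4, c5, c6, c7, c8]
  have s16 : (f ^ 2).coeff 16 = 1 := by
    rw [hm2]; simp [Finset.sum_range_succ, hz, c0, c1, c2, c3, c4, c5, c6, c7, c8]
  -- coefficients of the cube
  have t12 : (f ^ 3).coeff 12 = 6 * c * e + 6 * a * b * e + 3 * d * d + 6 * a * d * q + 3 * b * b * d + 3 * a * c * c + 6 * b * c * q + q * q * q := by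
    rw [hm3]; simp [Finset.sum_range_succ, hz, z2, c0, c1, c2, c3, c4, c5, c6, c7, c8, s0, s1, s2, s3, s4, s5, s6, s7, s8, s9, s10, s11, s12, s13, s14, s15, s16]; ring
  have t13 : (f ^ 3).coeff 13 = 6 * e * q + 3 * a * a * e + 6 * c * d + 6 * a * b * d + 6 * a * c * q + 3 * b * b * c + 3 * b * q * q := by
    rw [hm3]; simp [Finset.sum_range_succ, hz, z2, c0, c1, c2, c3, c4, c5, c6, c7, c8, s0, s1, s2, s3, s4, s5, s6, s7, s8, s9, s10, s11, s12, s13, s14, s15, s16]; ring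
  have t14 : (f ^ 3).coeff 14 = 6 * b * e + 6 * d * q + 3 * a * a * d + 3 * c * c + 6 * a * b * c + 3 * a * q * q + 3 * b * b * q := by
    rw [hm3]; simp [Finset.sum_range_succ, hz, z2, c0, c1, c2, c3, c4, c5, c6, c7, c8, s0, s1, s2, s3, s4, s5, s6, s7, s8, s9, s10, s11, s12, s13, s14, s15, s16]; ring
  have t15 : (f ^ 3).coeff 15 = 6 * a * e + 6 * b * d + 6 * c * q + 3 * a * a * c + 6 * a * b * q + b * b * b := by
    rw [hm3]; simp [Finset.sum_range_succ, hz, z2, c0, c1, c2, c3, c4, c5, c6, c7, c8, s0, s1, s2, s3, s4, s5, s6, s7, s8, s9, s10, s11, s12, s13, s14, s15, s16]; ring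
  have t16 : (f ^ 3).coeff 16 = 6 * a * d + 6 * b * c + 3 * q * q + 3 * a * a * q + 3 * a * b * b := by
    rw [hm3]; simp [Finset.sum_range_succ, hz, z2, c0, c1, c2, c3, c4, c5, c6, c7, c8, s0, s1, s2, s3, s4, s5, s6, s7, s8, s9, s10, s11, s12, s13, s14, s15, s16]; ring
  have t17 : (f ^ 3).coeff 17 = 3 * e + 6 * a * c + 6 * b * q + 3 * a * a * b := by
    rw [hm3]; simp [Finset.sum_range_succ, hz, z2, c0, c1, c2, c3, c4, c5, c6, c7, c8, s0, s1, s2, s3, s4, s5, s6, s7, s8, s9, s10, s11, s12, s13, s14, s15, s16]; ring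
  have t18 : (f ^ 3).coeff 18 = 3 * d + 6 * a * q + 3 * b * b + a * a * a := by
    rw [hm3]; simp [Finset.sum_range_succ, hz, z2, c0, c1, c2, c3, c4, c5, c6, c7, c8, s0, s1, s2, s3, s4, s5, s6, s7, s8, s9, s10, s11, s12, s13, s14, s15, s16]; ring
  have t19 : (f ^ 3).coeff 19 = 3 * c + 6 * a * b := by
    rw [hm3]; simp [Finset.sum_range_succ, hz, z2, c0, c1, c2, c3, c4, c5, c6, c7, c8, s0, s1, s2, s3, s4, s5, s6, s7, s8, s9, s10, s11, s12, s13, s14, s15, s16]; ring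
  have t20 : (f ^ 3).coeff 20 = 3 * q + 3 * a * a := by
    rw [hm3]; simp [Finset.sum_range_succ, hz, z2, c0, c1, c2, c3, c4, c5, c6, c7, c8, s0, s1, s2, s3, s4, s5, s6, s7, s8, s9, s10, s11, s12, s13, s14, s15, s16]; ring
  have t21 : (f ^ 3).coeff 21 = 3 * b := by
    rw [hm3]; simp [Finset.sum_range_succ, hz, z2, c0, c1, c2, c3, c4, c5, c6, c7, c8, s0, s1, s2, s3, s4, s5, s6, s7, s8, s9, s10, s11, s12, s13, s14, s15, s16]; ring
  have t22 : (f ^ 3).coeff 22 = 3 * a := by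
    rw [hm3]; simp [Finset.sum_range_succ, hz, z2, c0, c1, c2, c3, c4, c5, c6, c7, c8, s0, s1, s2, s3, s4, s5, s6, s7, s8, s9, s10, s11, s12, s13, s14, s15, s16]; ring
  have t23 : (f ^ 3).coeff 23 = 0 := by
    rw [hm3]; simp [Finset.sum_range_succ, hz, z2, c0, c1, c2, c3, c4, c5, c6, c7, c8, s0, s1, s2, s3, s4, s5, s6, s7, s8, s9, s10, s11, s12, s13, s14, s15, s16]
  have t24 : (f ^ 3).coeff 24 = 1 := by
    rw [hm3]; simp [Finset.sum_range_succ, hz, z2, c0, c1, c2, c3, c4, c5, c6, c7, c8, s0, s1, s2, s3, s4, s5, s6, s7, s8, s9, s10, s11, s12, s13, s14, s15, s16]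
  have h5 := hsum 5 (by norm_num) (by norm_num)
  have h6 := hsum 6 (by norm_num) (by norm_num)
  rw [show f ^ 5 = f ^ 2 * f ^ 3 by ring, hmul] at h5
  rw [show f ^ 6 = f ^ 3 * f ^ 3 by ring, hmul] at h6
  have p37 : (37 : ZMod 37) = 0 := by decide
  simp only [Finset.sum_range_succ, Finset.sum_range_zero, Nat.reduceSub, Nat.reduceAdd,
    Nat.reduceLT, z2, z3, Nat.sub_zero, mul_zero, zero_mul, add_zero, zero_add] at h5 h6
  rw [s12, s13, s14, s15, s16, t20, t21, t22, t23, t24] at h5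
  rw [t12, t13, t14, t15, t16, t17, t18, t19, t20, t21, t22, t23, t24] at h6
  constructor
  · linear_combination 15 * h5 - (2 * q + 4 * a ^ 2) * p37
  · linear_combination h6

theorem ev_cast (a b q c d e x : ℕ) :
    ((val a b q c d e x : ℕ) : ZMod 37) = ev a b q c d e x := by
  simp [val, ev]

theorem main (a b : ZMod 37) (hab : row a.val b.val = true) (q c d e : ZMod 37) :
    ¬ Function.Injective (ev a b q c d e) := by
  intro h
  obtain ⟨hq, hH⟩ := hermite a b q c d e h
  have p37 : (37 : ZMod 37) = 0 := by decide
  have na := ZMod.natCast_zmod_val a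
  have nb := ZMod.natCast_zmod_val b
  have nq := ZMod.natCast_zmod_val q
  have nc := ZMod.natCast_zmod_val c
  have nd := ZMod.natCast_zmod_val d
  have ne := ZMod.natCast_zmod_val e
  obtain ⟨i, j, hij, hj, hv⟩ := row_sound a.val b.val a.val_lt b.val_lt hab c.val d.val e.val q.val
    c.val_lt d.val_lt e.val_lt (by
      have : ((q.val : ℕ) : ZMod 37) = ((35 * a.val ^ 2 : ℕ) : ZMod 37) := by
        push_cast
        rw [na, nq]
        linear_combination hq - a ^ 2 * p37
      rw [← (ZMod.natCast_eq_natCast_iff' _ _ _).mp this, Nat.mod_eq_of_lt q.val_lt]) (by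
      apply Nat.mod_eq_zero_of_dvd
      rw [← ZMod.natCast_eq_zero_iff]
      simp only [Dc, N1, N0, Nat.cast_add, Nat.cast_mul, Nat.cast_pow, ZMod.natCast_mod, na, nb, nq,
        nc, nd, ne, Nat.cast_ofNat]
      linear_combination hH)
  have hv' := (ZMod.natCast_eq_natCast_iff' _ _ 37).mpr hv
  rw [ev_cast, ev_cast, na, nb, nq, nc, nd, ne] at hv'
  have h3 := (ZMod.natCast_eq_natCast_iff' _ _ 37).mp (h hv')
  rw [Nat.mod_eq_of_lt hj, Nat.mod_eq_of_lt (hij.trans hj)] at h3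
  omega

theorem not_inj (a b q c d e : ZMod 37) : ¬ Function.Injective (ev a b q c d e) := by
  intro h
  obtain ⟨s, hs, hr⟩ := reps a b
  refine main (a * (s * s)) (b * (s * s * s)) ?_ (q * s ^ 4) (c * s ^ 5) (d * s ^ 6) (e * s ^ 7) ?_
  · rcases hr with ⟨h1, h2⟩ | ⟨h1 | h1, h2⟩
    · rw [h1]; exact allB_spec _ _ rows0 _ h2
    · rw [h1]; exact allB_spec _ _ rows1 _ h2
    · rw [h1]; exact allB_spec _ _ rows2 _ h2
  · have hg : ∀ x, ev (a * (s * s)) (b * (s * s * s)) (q * s ^ 4) (c * s ^ 5) (d * s ^ 6)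
        (e * s ^ 7) x = s ^ 8 * ev a b q c d e (s⁻¹ * x) := by
      intro x
      obtain ⟨y, rfl⟩ : ∃ y, x = s * y := ⟨s⁻¹ * x, by rw [mul_inv_cancel_left₀ hs]⟩
      rw [inv_mul_cancel_left₀ hs]
      unfold ev
      ring
    intro x y hxy
    rw [hg, hg] at hxy
    exact mul_left_cancel₀ (inv_ne_zero hs) (h (mul_left_cancel₀ (pow_ne_zero 8 hs) hxy))

end PP37

theorem no_normalized_pp_deg8_F37 (f : Polynomial (ZMod 37))
    (hmonic : f.Monic) (hdeg : f.natDegree = 8)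
    (h7 : f.coeff 7 = 0) (h0 : f.coeff 0 = 0) :
    ¬ Function.Bijective (fun a : ZMod 37 => f.eval a) := by
  intro hb
  have h8 : f.coeff 8 = 1 := by
    have := hmonic.coeff_natDegree
    rwa [hdeg] at this
  apply PP37.not_inj (f.coeff 6) (f.coeff 5) (f.coeff 4) (f.coeff 3) (f.coeff 2) (f.coeff 1)
  have : (fun a : ZMod 37 => f.eval a) = PP37.ev (f.coeff 6) (f.coeff 5) (f.coeff 4) (f.coeff 3)
      (f.coeff 2) (f.coeff 1) := by
    funext x
    rw [Polynomial.eval_eq_sum_range, hdeg]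
    simp only [Finset.sum_range_succ, Finset.sum_range_zero, h7, h0, h8, PP37.ev]
    ring
  rw [← this]
  exact hb.1
end

section
/- There is no permutation polynomial of degree 8 over the finite field F_43. -/
set_option linter.unusedSimpArgs false

namespace PP43
noncomputable section

/-- Precomputed data: `x`, `x^3 mod 43` and the part of `f x` not involving `a3, a1`. -/
inductive PList : Type
  | nil : PList
  | cons (x c b : ℕ) (t : PList) : PList

/-- Evaluate `n` before passing it on (so that the kernel works with numerals). -/
def force {α : Type} (n : ℕ) (k : ℕ → α) : α :=
  Nat.rec (motive := fun _ => α) (k 0) (fun m _ => k (Nat.succ m)) n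

/-- Is there a repeated value of `b + a3 * c + a1 * x` along the list, or one in the mask? -/
def coll (a3 a1 : ℕ) (l : PList) : ℕ → Bool :=
  PList.rec (motive := fun _ => ℕ → Bool) (fun _ => false)
    (fun x c b _ ih m =>
      (fun p : ℕ =>
        Bool.rec (motive := fun _ => Bool) true (ih (Nat.lor m p)) (Nat.beq (Nat.land m p) 0))
      (Nat.shiftLeft 1
        (Nat.mod (Nat.add b (Nat.add (Nat.mul a3 c) (Nat.mul a1 x))) 43))) l

/-- Packed table of square roots mod 43 (63 = no root). -/
def sqrtTable : ℕ :=
  457765315325690195129665304456812299844667396203569442929358692186165356785728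

def sqr (d : ℕ) : ℕ := Nat.mod (Nat.shiftRight sqrtTable (Nat.mul 6 d)) 64

def mkList (a6 a5 a4 a2 : ℕ) : ℕ → PList
  | 0 => PList.nil
  | n + 1 => force ((n ^ 8 + a6 * n ^ 6 + a5 * n ^ 5 + a4 * n ^ 4 + a2 * n ^ 2) % 43) fun b =>
      force (n ^ 3 % 43) fun c => force n fun x =>
        PList.cons x c b (mkList a6 a5 a4 a2 n)

def checkA3 (b0 b1 c0 c1 c2 : ℕ) (l : PList) (a3 : ℕ) : Bool :=
  force ((b0 + b1 * a3) % 43) fun b =>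
    force (sqr ((b * b + 2 * (c0 + c1 * a3 + c2 * (a3 * a3))) % 43)) fun r =>
      Bool.rec (motive := fun _ => Bool)
        (force ((b + r) % 43) fun a1 =>
          force ((b + (43 - r)) % 43) fun a1' =>
          Bool.rec (motive := fun _ => Bool) false (coll a3 a1' l 0) (coll a3 a1 l 0))
        true (Nat.beq r 63)

def allBelow (p : ℕ → Bool) (n : ℕ) : Bool :=
  Nat.rec (motive := fun _ => Bool) true
    (fun m ih => Bool.rec (motive := fun _ => Bool) false ih (p m)) n

def fa2 (a6 a5 a4 : ℕ) : ℕ := (38 * a6 * a4 + 19 * a5 ^ 2 + 11 * a6 ^ 3) % 43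
def fb0 (a6 a5 a4 : ℕ) : ℕ := (38 * a5 * a4 + 33 * a6 ^ 2 * a5) % 43
def fb1 (a6 : ℕ) : ℕ := (38 * a6) % 43
def fc0 (a6 a5 a4 a2 : ℕ) : ℕ :=
  (19*a4^2*a2 + 38*a5^2*a4^2 + 19*a6*a2^2 + 11*a6*a4^3 + 33*a6*a5^2*a2 + 19*a6*a5^4
    + 33*a6^2*a4*a2 + 28*a6^2*a5^2*a4 + 38*a6^3*a4^2 + 19*a6^4*a2 + 19*a6^4*a5^2
    + 42*a6^5*a4 + 1*a6^7) % 43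
def fc1 (a6 a5 a4 a2 : ℕ) : ℕ :=
  (38*a5*a2 + 11*a5^3 + 23*a6*a5*a4 + 33*a6^3*a5) % 43
def fc2 (a6 a4 : ℕ) : ℕ := (19*a4 + 38*a6^2) % 43

def checkA4 (a6 a5 a4 : ℕ) : Bool :=
  force (fa2 a6 a5 a4) fun a2 => force (fb0 a6 a5 a4) fun b0 => force (fb1 a6) fun b1 =>
    force (fc0 a6 a5 a4 a2) fun c0 => force (fc1 a6 a5 a4 a2) fun c1 => force (fc2 a6 a4) fun c2 =>
      allBelow (checkA3 b0 b1 c0 c1 c2 (mkList a6 a5 a4 a2 43)) 43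

def checkPair (a6 a5 : ℕ) : Bool := allBelow (checkA4 a6 a5) 43

theorem force_eq {α : Type} (n : ℕ) (k : ℕ → α) : force n k = k n := by
  cases n <;> rfl

theorem allBelow_spec (p : ℕ → Bool) (n : ℕ) (h : allBelow p n = true) :
    ∀ m < n, p m = true := by
  induction n with
  | zero => intro m hm; omega
  | succ n ih =>
    have e : allBelow p (n + 1)
      = Bool.rec (motive := fun _ => Bool) false (allBelow p n) (p n) := rfl
    rw [e] at h
    intro m hm
    cases hp : p n with
    | false => rw [hp] at h; simp at h
    | true =>
      rw [hp] at h
      rcases Nat.lt_succ_iff_lt_or_eq.mp hm with h1 | h1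
      · exact ih h m h1
      · rw [h1, hp]

theorem coll_mkList (a6 a5 a4 a3 a2 a1 : ℕ) (G : ℕ → ℕ)
    (hG : ∀ x, (((x ^ 8 + a6 * x ^ 6 + a5 * x ^ 5 + a4 * x ^ 4 + a2 * x ^ 2) % 43)
      + (a3 * (x ^ 3 % 43) + a1 * x)) % 43 = G x)
    (hinj : ∀ x < 43, ∀ y < 43, G x = G y → x = y) (n : ℕ) (hn : n ≤ 43) :
    ∀ m : ℕ, (∀ x < n, m.testBit (G x) = false) →
      coll a3 a1 (mkList a6 a5 a4 a2 n) m = false := by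
  induction n with
  | zero => intro m _; rfl
  | succ n ih =>
    intro m hm
    have e : mkList a6 a5 a4 a2 (n + 1) =
        PList.cons n (n ^ 3 % 43)
          ((n ^ 8 + a6 * n ^ 6 + a5 * n ^ 5 + a4 * n ^ 4 + a2 * n ^ 2) % 43)
          (mkList a6 a5 a4 a2 n) := by
      rw [mkList, force_eq, force_eq, force_eq]
    have e2 : coll a3 a1 (mkList a6 a5 a4 a2 (n + 1)) m =
        Bool.rec (motive := fun _ => Bool) true
          (coll a3 a1 (mkList a6 a5 a4 a2 n) (m ||| (1 <<< G n)))
          (Nat.beq (m &&& (1 <<< G n)) 0) := by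
      rw [e, ← hG n]; rfl
    have h0 : m &&& (1 <<< G n) = 0 := by
      rw [Nat.one_shiftLeft, Nat.and_two_pow, hm n (by omega)]; simp
    rw [e2, h0]
    apply ih (by omega)
    intro x hx
    rw [Nat.one_shiftLeft, Nat.testBit_or, hm x (by omega), Nat.testBit_two_pow]
    have : G n ≠ G x := fun h => by
      have := hinj n (by omega) x (by omega) h
      omega
    simp [this]

theorem modval (N : ℕ) (z : ZMod 43) (h : (N : ZMod 43) = z) : N % 43 = z.val := by
  rw [← h, ZMod.val_natCast]

theorem sqr_spec : ∀ s : ZMod 43, sqr (s ^ 2).val ≠ 63 ∧ sqr (s ^ 2).val ≤ 43 ∧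
    (s = (sqr (s ^ 2).val : ℕ) ∨ s = ((43 - sqr (s ^ 2).val : ℕ) : ZMod 43)) := by
  decide +kernel

theorem val_cast (z : ZMod 43) : ((z.val : ℕ) : ZMod 43) = z := ZMod.natCast_zmod_val z

theorem checkA3_spec (b0 b1 c0 c1 c2 : ℕ) (l : PList) (a3 b r : ℕ)
    (hb : (b0 + b1 * a3) % 43 = b)
    (hr : sqr ((b * b + 2 * (c0 + c1 * a3 + c2 * (a3 * a3))) % 43) = r) (hne : r ≠ 63)
    (h : checkA3 b0 b1 c0 c1 c2 l a3 = true) :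
    coll a3 ((b + r) % 43) l 0 = true ∧ coll a3 ((b + (43 - r)) % 43) l 0 = true := by
  have hr' : Nat.beq r 63 = false := by
    rw [← Bool.not_eq_true, Nat.beq_eq]; exact hne
  unfold checkA3 at h
  rw [hb, force_eq, hr, force_eq, hr', force_eq, force_eq] at h
  revert h
  generalize coll a3 ((b + r) % 43) l 0 = u
  generalize coll a3 ((b + (43 - r)) % 43) l 0 = v
  cases u <;> cases v <;> simp

theorem checkA4_spec (a6 a5 a4 a2 : ℕ) (h2 : fa2 a6 a5 a4 = a2) (h : checkA4 a6 a5 a4 = true)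
    (a3 : ℕ) (h3 : a3 < 43) :
    checkA3 (fb0 a6 a5 a4) (fb1 a6) (fc0 a6 a5 a4 a2) (fc1 a6 a5 a4 a2) (fc2 a6 a4)
      (mkList a6 a5 a4 a2 43) a3 = true := by
  unfold checkA4 at h
  rw [h2, force_eq, force_eq, force_eq, force_eq, force_eq, force_eq] at h
  exact allBelow_spec _ _ h a3 h3

theorem checkPair_spec (a6 a5 : ℕ) (h : checkPair a6 a5 = true) (a4 : ℕ) (h4 : a4 < 43) :
    checkA4 a6 a5 a4 = true := by
  unfold checkPair at h
  exact allBelow_spec _ _ h a4 h4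

theorem check_sound (a6 a5 a4 a3 a2 a1 : ZMod 43)
    (hinj : Function.Injective fun x : ZMod 43 =>
      x ^ 8 + a6 * x ^ 6 + a5 * x ^ 5 + a4 * x ^ 4 + a3 * x ^ 3 + a2 * x ^ 2 + a1 * x)
    (h2 : a2 = 38 * a6 * a4 + 19 * a5 ^ 2 + 11 * a6 ^ 3)
    (h7 : 21*a1^2 + 19*a4*a3^2 + 19*a4^2*a2 + 38*a5*a3*a2 + 38*a5*a4*a1 + 38*a5^2*a4^2
      + 11*a5^3*a3 + 19*a6*a2^2 + 38*a6*a3*a1 + 11*a6*a4^3 + 23*a6*a5*a4*a3 + 33*a6*a5^2*a2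
      + 19*a6*a5^4 + 38*a6^2*a3^2 + 33*a6^2*a4*a2 + 33*a6^2*a5*a1 + 28*a6^2*a5^2*a4
      + 38*a6^3*a4^2 + 33*a6^3*a5*a3 + 19*a6^4*a2 + 19*a6^4*a5^2 + 42*a6^5*a4 + 1*a6^7 = 0)
    (hc : checkPair a6.val a5.val = true) : False := by
  have p43 : (43 : ZMod 43) = 0 := by decide
  have c1 := checkPair_spec _ _ hc a4.val (ZMod.val_lt a4)
  have e2 : fa2 a6.val a5.val a4.val = a2.val := by
    unfold fa2; apply modval; push_cast; simp only [val_cast]; rw [h2]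
  have c2 := checkA4_spec _ _ _ _ e2 c1 a3.val (ZMod.val_lt a3)
  obtain ⟨B, hB⟩ : ∃ B, B = 38*a5*a4 + 33*a6^2*a5 + 38*a6*a3 := ⟨_, rfl⟩
  have eB : (fb0 a6.val a5.val a4.val + fb1 a6.val * a3.val) % 43 = B.val := by
    apply modval
    simp only [fb0, fb1]; push_cast; simp only [ZMod.natCast_mod]; push_cast
    simp only [val_cast]; rw [hB]
  have eD : (B.val * B.val + 2 * (fc0 a6.val a5.val a4.val a2.val
      + fc1 a6.val a5.val a4.val a2.val * a3.val
      + fc2 a6.val a4.val * (a3.val * a3.val))) % 43 = ((a1 - B) ^ 2).val := by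
    apply modval
    simp only [fc0, fc1, fc2]; push_cast; simp only [ZMod.natCast_mod]; push_cast
    simp only [val_cast]
    linear_combination 2 * h7 - a1 ^ 2 * p43 + 2 * a1 * hB
  obtain ⟨s1, s2, s3⟩ := sqr_spec (a1 - B)
  have hG : ∀ b : ℕ, (b : ZMod 43) = a1 →
      coll a3.val (b % 43) (mkList a6.val a5.val a4.val a2.val 43) 0 = false := by
    intro b hb
    rw [modval b a1 hb]
    apply coll_mkList _ _ _ _ _ _ (fun x : ℕ => ((x : ZMod 43) ^ 8 + a6 * (x : ZMod 43) ^ 6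
      + a5 * (x : ZMod 43) ^ 5 + a4 * (x : ZMod 43) ^ 4 + a3 * (x : ZMod 43) ^ 3
      + a2 * (x : ZMod 43) ^ 2 + a1 * (x : ZMod 43)).val) _ _ 43 le_rfl
    · intro x _; simp
    · intro x
      apply modval
      push_cast; simp only [ZMod.natCast_mod]; push_cast; simp only [val_cast]; ring
    · intro x hx y hy h
      have h' := hinj (ZMod.val_injective 43 h)
      have := congrArg ZMod.val h'
      rwa [ZMod.val_natCast, ZMod.val_natCast, Nat.mod_eq_of_lt hx, Nat.mod_eq_of_lt hy] at this
  obtain ⟨d1, d2⟩ := checkA3_spec _ _ _ _ _ _ _ _ _ eB (congrArg sqr eD) s1 c2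
  rcases s3 with s3 | s3
  · rw [hG _ (by rw [Nat.cast_add, ← s3, val_cast]; ring)] at d1
    exact Bool.false_ne_true d1
  · rw [hG _ (by rw [Nat.cast_add, ← s3, val_cast]; ring)] at d2
    exact Bool.false_ne_true d2

theorem conv {R : Type} [CommRing R] (p q : Polynomial R) (n : ℕ) :
    (p * q).coeff n = ∑ i ∈ Finset.range (n + 1), p.coeff i * q.coeff (n - i) := by
  rw [Polynomial.coeff_mul, Finset.Nat.sum_antidiagonal_eq_sum_range_succ_mk]

theorem coeff_formulas {R : Type} [CommRing R] (a6 a5 a4 a3 a2 a1 : R) (U : Polynomial R)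
    (hU : U = 1 + Polynomial.C a6 * Polynomial.X ^ 2 + Polynomial.C a5 * Polynomial.X ^ 3
      + Polynomial.C a4 * Polynomial.X ^ 4 + Polynomial.C a3 * Polynomial.X ^ 5
      + Polynomial.C a2 * Polynomial.X ^ 6 + Polynomial.C a1 * Polynomial.X ^ 7) :
    (U ^ 6).coeff 6 = 6*a2 + 15*a5^2 + 30*a6*a4 + 20*a6^3 ∧
    (U ^ 7).coeff 14 = 21*a1^2 + 105*a4*a3^2 + 105*a4^2*a2 + 210*a5*a3*a2 + 210*a5*a4*a1
        + 210*a5^2*a4^2 + 140*a5^3*a3 + 105*a6*a2^2 + 210*a6*a3*a1 + 140*a6*a4^3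
        + 840*a6*a5*a4*a3 + 420*a6*a5^2*a2 + 105*a6*a5^4 + 210*a6^2*a3^2 + 420*a6^2*a4*a2
        + 420*a6^2*a5*a1 + 630*a6^2*a5^2*a4 + 210*a6^3*a4^2 + 420*a6^3*a5*a3 + 105*a6^4*a2
        + 105*a6^4*a5^2 + 42*a6^5*a4 + 1*a6^7 := by
  have u0 : U.coeff 0 = 1 := by
    rw [hU]; simp [Polynomial.coeff_one, Polynomial.coeff_X_pow]
  have u1 : U.coeff 1 = 0 := by
    rw [hU]; simp [Polynomial.coeff_one, Polynomial.coeff_X_pow]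
  have u2 : U.coeff 2 = 1*a6 := by
    rw [hU]; simp [Polynomial.coeff_one, Polynomial.coeff_X_pow]
  have u3 : U.coeff 3 = 1*a5 := by
    rw [hU]; simp [Polynomial.coeff_one, Polynomial.coeff_X_pow]
  have u4 : U.coeff 4 = 1*a4 := by
    rw [hU]; simp [Polynomial.coeff_one, Polynomial.coeff_X_pow]
  have u5 : U.coeff 5 = 1*a3 := by
    rw [hU]; simp [Polynomial.coeff_one, Polynomial.coeff_X_pow]
  have u6 : U.coeff 6 = 1*a2 := by
    rw [hU]; simp [Polynomial.coeff_one, Polynomial.coeff_X_pow]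
  have u7 : U.coeff 7 = 1*a1 := by
    rw [hU]; simp [Polynomial.coeff_one, Polynomial.coeff_X_pow]
  have u8 : U.coeff 8 = 0 := by
    rw [hU]; simp [Polynomial.coeff_one, Polynomial.coeff_X_pow]
  have u9 : U.coeff 9 = 0 := by
    rw [hU]; simp [Polynomial.coeff_one, Polynomial.coeff_X_pow]
  have u10 : U.coeff 10 = 0 := by
    rw [hU]; simp [Polynomial.coeff_one, Polynomial.coeff_X_pow]
  have u11 : U.coeff 11 = 0 := by
    rw [hU]; simp [Polynomial.coeff_one, Polynomial.coeff_X_pow]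
  have u12 : U.coeff 12 = 0 := by
    rw [hU]; simp [Polynomial.coeff_one, Polynomial.coeff_X_pow]
  have u13 : U.coeff 13 = 0 := by
    rw [hU]; simp [Polynomial.coeff_one, Polynomial.coeff_X_pow]
  have u14 : U.coeff 14 = 0 := by
    rw [hU]; simp [Polynomial.coeff_one, Polynomial.coeff_X_pow]
  have v0 : (U * U).coeff 0 = 1 := by
    rw [conv]; simp only [Finset.sum_range_succ, Finset.sum_range_zero, Nat.reduceSub, Nat.sub_zero, Nat.sub_self,
      u0]; ring
  have v1 : (U * U).coeff 1 = 0 := by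
    rw [conv]; simp only [Finset.sum_range_succ, Finset.sum_range_zero, Nat.reduceSub, Nat.sub_zero, Nat.sub_self,
      u0, u1]; ring
  have v2 : (U * U).coeff 2 = 2*a6 := by
    rw [conv]; simp only [Finset.sum_range_succ, Finset.sum_range_zero, Nat.reduceSub, Nat.sub_zero, Nat.sub_self,
      u0, u1, u2]; ring
  have v3 : (U * U).coeff 3 = 2*a5 := by
    rw [conv]; simp only [Finset.sum_range_succ, Finset.sum_range_zero, Nat.reduceSub, Nat.sub_zero, Nat.sub_self,
      u0, u1, u2, u3]; ring
  have v4 : (U * U).coeff 4 = 2*a4 + 1*a6^2 := by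
    rw [conv]; simp only [Finset.sum_range_succ, Finset.sum_range_zero, Nat.reduceSub, Nat.sub_zero, Nat.sub_self,
      u0, u1, u2, u3, u4]; ring
  have v5 : (U * U).coeff 5 = 2*a3 + 2*a6*a5 := by
    rw [conv]; simp only [Finset.sum_range_succ, Finset.sum_range_zero, Nat.reduceSub, Nat.sub_zero, Nat.sub_self,
      u0, u1, u2, u3, u4, u5]; ring
  have v6 : (U * U).coeff 6 = 2*a2 + 1*a5^2 + 2*a6*a4 := by
    rw [conv]; simp only [Finset.sum_range_succ, Finset.sum_range_zero, Nat.reduceSub, Nat.sub_zero, Nat.sub_self,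
      u0, u1, u2, u3, u4, u5, u6]; ring
  have v7 : (U * U).coeff 7 = 2*a1 + 2*a5*a4 + 2*a6*a3 := by
    rw [conv]; simp only [Finset.sum_range_succ, Finset.sum_range_zero, Nat.reduceSub, Nat.sub_zero, Nat.sub_self,
      u0, u1, u2, u3, u4, u5, u6, u7]; ring
  have v8 : (U * U).coeff 8 = 1*a4^2 + 2*a5*a3 + 2*a6*a2 := by
    rw [conv]; simp only [Finset.sum_range_succ, Finset.sum_range_zero, Nat.reduceSub, Nat.sub_zero, Nat.sub_self,
      u0, u1, u2, u3, u4, u5, u6, u7, u8]; ring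
  have v9 : (U * U).coeff 9 = 2*a4*a3 + 2*a5*a2 + 2*a6*a1 := by
    rw [conv]; simp only [Finset.sum_range_succ, Finset.sum_range_zero, Nat.reduceSub, Nat.sub_zero, Nat.sub_self,
      u0, u1, u2, u3, u4, u5, u6, u7, u8, u9]; ring
  have v10 : (U * U).coeff 10 = 1*a3^2 + 2*a4*a2 + 2*a5*a1 := by
    rw [conv]; simp only [Finset.sum_range_succ, Finset.sum_range_zero, Nat.reduceSub, Nat.sub_zero, Nat.sub_self,
      u0, u1, u2, u3, u4, u5, u6, u7, u8, u9, u10]; ring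
  have v11 : (U * U).coeff 11 = 2*a3*a2 + 2*a4*a1 := by
    rw [conv]; simp only [Finset.sum_range_succ, Finset.sum_range_zero, Nat.reduceSub, Nat.sub_zero, Nat.sub_self,
      u0, u1, u2, u3, u4, u5, u6, u7, u8, u9, u10, u11]; ring
  have v12 : (U * U).coeff 12 = 1*a2^2 + 2*a3*a1 := by
    rw [conv]; simp only [Finset.sum_range_succ, Finset.sum_range_zero, Nat.reduceSub, Nat.sub_zero, Nat.sub_self,
      u0, u1, u2, u3, u4, u5, u6, u7, u8, u9, u10, u11, u12]; ring
  have v13 : (U * U).coeff 13 = 2*a2*a1 := by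
    rw [conv]; simp only [Finset.sum_range_succ, Finset.sum_range_zero, Nat.reduceSub, Nat.sub_zero, Nat.sub_self,
      u0, u1, u2, u3, u4, u5, u6, u7, u8, u9, u10, u11, u12, u13]; ring
  have v14 : (U * U).coeff 14 = 1*a1^2 := by
    rw [conv]; simp only [Finset.sum_range_succ, Finset.sum_range_zero, Nat.reduceSub, Nat.sub_zero, Nat.sub_self,
      u0, u1, u2, u3, u4, u5, u6, u7, u8, u9, u10, u11, u12, u13, u14]; ring
  have w0 : ((U * U) * U).coeff 0 = 1 := by
    rw [conv]; simp only [Finset.sum_range_succ, Finset.sum_range_zero, Nat.reduceSub, Nat.sub_zero, Nat.sub_self,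
      v0, u0]; ring
  have w1 : ((U * U) * U).coeff 1 = 0 := by
    rw [conv]; simp only [Finset.sum_range_succ, Finset.sum_range_zero, Nat.reduceSub, Nat.sub_zero, Nat.sub_self,
      v0, v1, u0, u1]; ring
  have w2 : ((U * U) * U).coeff 2 = 3*a6 := by
    rw [conv]; simp only [Finset.sum_range_succ, Finset.sum_range_zero, Nat.reduceSub, Nat.sub_zero, Nat.sub_self,
      v0, v1, v2, u0, u1, u2]; ring
  have w3 : ((U * U) * U).coeff 3 = 3*a5 := by
    rw [conv]; simp only [Finset.sum_range_succ, Finset.sum_range_zero, Nat.reduceSub, Nat.sub_zero, Nat.sub_self,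
      v0, v1, v2, v3, u0, u1, u2, u3]; ring
  have w4 : ((U * U) * U).coeff 4 = 3*a4 + 3*a6^2 := by
    rw [conv]; simp only [Finset.sum_range_succ, Finset.sum_range_zero, Nat.reduceSub, Nat.sub_zero, Nat.sub_self,
      v0, v1, v2, v3, v4, u0, u1, u2, u3, u4]; ring
  have w5 : ((U * U) * U).coeff 5 = 3*a3 + 6*a6*a5 := by
    rw [conv]; simp only [Finset.sum_range_succ, Finset.sum_range_zero, Nat.reduceSub, Nat.sub_zero, Nat.sub_self,
      v0, v1, v2, v3, v4, v5, u0, u1, u2, u3, u4, u5]; ring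
  have w6 : ((U * U) * U).coeff 6 = 3*a2 + 3*a5^2 + 6*a6*a4 + 1*a6^3 := by
    rw [conv]; simp only [Finset.sum_range_succ, Finset.sum_range_zero, Nat.reduceSub, Nat.sub_zero, Nat.sub_self,
      v0, v1, v2, v3, v4, v5, v6, u0, u1, u2, u3, u4, u5, u6]; ring
  have w7 : ((U * U) * U).coeff 7 = 3*a1 + 6*a5*a4 + 6*a6*a3 + 3*a6^2*a5 := by
    rw [conv]; simp only [Finset.sum_range_succ, Finset.sum_range_zero, Nat.reduceSub, Nat.sub_zero, Nat.sub_self,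
      v0, v1, v2, v3, v4, v5, v6, v7, u0, u1, u2, u3, u4, u5, u6, u7]; ring
  have w8 : ((U * U) * U).coeff 8 = 3*a4^2 + 6*a5*a3 + 6*a6*a2 + 3*a6*a5^2 + 3*a6^2*a4 := by
    rw [conv]; simp only [Finset.sum_range_succ, Finset.sum_range_zero, Nat.reduceSub, Nat.sub_zero, Nat.sub_self,
      v0, v1, v2, v3, v4, v5, v6, v7, v8, u0, u1, u2, u3, u4, u5, u6, u7, u8]; ring
  have w9 : ((U * U) * U).coeff 9 = 6*a4*a3 + 6*a5*a2 + 1*a5^3 + 6*a6*a1 + 6*a6*a5*a4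
        + 3*a6^2*a3 := by
    rw [conv]; simp only [Finset.sum_range_succ, Finset.sum_range_zero, Nat.reduceSub, Nat.sub_zero, Nat.sub_self,
      v0, v1, v2, v3, v4, v5, v6, v7, v8, v9, u0, u1, u2, u3, u4, u5, u6, u7, u8, u9]; ring
  have w10 : ((U * U) * U).coeff 10 = 3*a3^2 + 6*a4*a2 + 6*a5*a1 + 3*a5^2*a4 + 3*a6*a4^2
        + 6*a6*a5*a3 + 3*a6^2*a2 := by
    rw [conv]; simp only [Finset.sum_range_succ, Finset.sum_range_zero, Nat.reduceSub, Nat.sub_zero, Nat.sub_self,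
      v0, v1, v2, v3, v4, v5, v6, v7, v8, v9, v10, u0, u1, u2, u3, u4, u5, u6, u7, u8, u9, u10]; ring
  have w11 : ((U * U) * U).coeff 11 = 6*a3*a2 + 6*a4*a1 + 3*a5*a4^2 + 3*a5^2*a3 + 6*a6*a4*a3
        + 6*a6*a5*a2 + 3*a6^2*a1 := by
    rw [conv]; simp only [Finset.sum_range_succ, Finset.sum_range_zero, Nat.reduceSub, Nat.sub_zero, Nat.sub_self,
      v0, v1, v2, v3, v4, v5, v6, v7, v8, v9, v10, v11, u0, u1, u2, u3, u4, u5, u6, u7, u8, u9, u10, u11]; ring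
  have w12 : ((U * U) * U).coeff 12 = 3*a2^2 + 6*a3*a1 + 1*a4^3 + 6*a5*a4*a3 + 3*a5^2*a2
        + 3*a6*a3^2 + 6*a6*a4*a2 + 6*a6*a5*a1 := by
    rw [conv]; simp only [Finset.sum_range_succ, Finset.sum_range_zero, Nat.reduceSub, Nat.sub_zero, Nat.sub_self,
      v0, v1, v2, v3, v4, v5, v6, v7, v8, v9, v10, v11, v12, u0, u1, u2, u3, u4, u5, u6, u7, u8, u9, u10, u11, u12]; ring
  have w13 : ((U * U) * U).coeff 13 = 6*a2*a1 + 3*a4^2*a3 + 3*a5*a3^2 + 6*a5*a4*a2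
        + 3*a5^2*a1 + 6*a6*a3*a2 + 6*a6*a4*a1 := by
    rw [conv]; simp only [Finset.sum_range_succ, Finset.sum_range_zero, Nat.reduceSub, Nat.sub_zero, Nat.sub_self,
      v0, v1, v2, v3, v4, v5, v6, v7, v8, v9, v10, v11, v12, v13, u0, u1, u2, u3, u4, u5, u6, u7, u8, u9, u10, u11, u12, u13]; ring
  have w14 : ((U * U) * U).coeff 14 = 3*a1^2 + 3*a4*a3^2 + 3*a4^2*a2 + 6*a5*a3*a2
        + 6*a5*a4*a1 + 3*a6*a2^2 + 6*a6*a3*a1 := by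
    rw [conv]; simp only [Finset.sum_range_succ, Finset.sum_range_zero, Nat.reduceSub, Nat.sub_zero, Nat.sub_self,
      v0, v1, v2, v3, v4, v5, v6, v7, v8, v9, v10, v11, v12, v13, v14, u0, u1, u2, u3, u4, u5, u6, u7, u8, u9, u10, u11, u12, u13, u14]; ring
  have z0 : ((U * U) * (U * U)).coeff 0 = 1 := by
    rw [conv]; simp only [Finset.sum_range_succ, Finset.sum_range_zero, Nat.reduceSub, Nat.sub_zero, Nat.sub_self,
      v0]; ring
  have z1 : ((U * U) * (U * U)).coeff 1 = 0 := by
    rw [conv]; simp only [Finset.sum_range_succ, Finset.sum_range_zero, Nat.reduceSub, Nat.sub_zero, Nat.sub_self,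
      v0, v1]; ring
  have z2 : ((U * U) * (U * U)).coeff 2 = 4*a6 := by
    rw [conv]; simp only [Finset.sum_range_succ, Finset.sum_range_zero, Nat.reduceSub, Nat.sub_zero, Nat.sub_self,
      v0, v1, v2]; ring
  have z3 : ((U * U) * (U * U)).coeff 3 = 4*a5 := by
    rw [conv]; simp only [Finset.sum_range_succ, Finset.sum_range_zero, Nat.reduceSub, Nat.sub_zero, Nat.sub_self,
      v0, v1, v2, v3]; ring
  have z4 : ((U * U) * (U * U)).coeff 4 = 4*a4 + 6*a6^2 := by
    rw [conv]; simp only [Finset.sum_range_succ, Finset.sum_range_zero, Nat.reduceSub, Nat.sub_zero, Nat.sub_self,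
      v0, v1, v2, v3, v4]; ring
  have z5 : ((U * U) * (U * U)).coeff 5 = 4*a3 + 12*a6*a5 := by
    rw [conv]; simp only [Finset.sum_range_succ, Finset.sum_range_zero, Nat.reduceSub, Nat.sub_zero, Nat.sub_self,
      v0, v1, v2, v3, v4, v5]; ring
  have z6 : ((U * U) * (U * U)).coeff 6 = 4*a2 + 6*a5^2 + 12*a6*a4 + 4*a6^3 := by
    rw [conv]; simp only [Finset.sum_range_succ, Finset.sum_range_zero, Nat.reduceSub, Nat.sub_zero, Nat.sub_self,
      v0, v1, v2, v3, v4, v5, v6]; ring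
  have z7 : ((U * U) * (U * U)).coeff 7 = 4*a1 + 12*a5*a4 + 12*a6*a3 + 12*a6^2*a5 := by
    rw [conv]; simp only [Finset.sum_range_succ, Finset.sum_range_zero, Nat.reduceSub, Nat.sub_zero, Nat.sub_self,
      v0, v1, v2, v3, v4, v5, v6, v7]; ring
  have z8 : ((U * U) * (U * U)).coeff 8 = 6*a4^2 + 12*a5*a3 + 12*a6*a2 + 12*a6*a5^2
        + 12*a6^2*a4 + 1*a6^4 := by
    rw [conv]; simp only [Finset.sum_range_succ, Finset.sum_range_zero, Nat.reduceSub, Nat.sub_zero, Nat.sub_self,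
      v0, v1, v2, v3, v4, v5, v6, v7, v8]; ring
  have z9 : ((U * U) * (U * U)).coeff 9 = 12*a4*a3 + 12*a5*a2 + 4*a5^3 + 12*a6*a1
        + 24*a6*a5*a4 + 12*a6^2*a3 + 4*a6^3*a5 := by
    rw [conv]; simp only [Finset.sum_range_succ, Finset.sum_range_zero, Nat.reduceSub, Nat.sub_zero, Nat.sub_self,
      v0, v1, v2, v3, v4, v5, v6, v7, v8, v9]; ring
  have z10 : ((U * U) * (U * U)).coeff 10 = 6*a3^2 + 12*a4*a2 + 12*a5*a1 + 12*a5^2*a4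
        + 12*a6*a4^2 + 24*a6*a5*a3 + 12*a6^2*a2 + 6*a6^2*a5^2 + 4*a6^3*a4 := by
    rw [conv]; simp only [Finset.sum_range_succ, Finset.sum_range_zero, Nat.reduceSub, Nat.sub_zero, Nat.sub_self,
      v0, v1, v2, v3, v4, v5, v6, v7, v8, v9, v10]; ring
  have z11 : ((U * U) * (U * U)).coeff 11 = 12*a3*a2 + 12*a4*a1 + 12*a5*a4^2 + 12*a5^2*a3
        + 24*a6*a4*a3 + 24*a6*a5*a2 + 4*a6*a5^3 + 12*a6^2*a1 + 12*a6^2*a5*a4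
        + 4*a6^3*a3 := by
    rw [conv]; simp only [Finset.sum_range_succ, Finset.sum_range_zero, Nat.reduceSub, Nat.sub_zero, Nat.sub_self,
      v0, v1, v2, v3, v4, v5, v6, v7, v8, v9, v10, v11]; ring
  have z12 : ((U * U) * (U * U)).coeff 12 = 6*a2^2 + 12*a3*a1 + 4*a4^3 + 24*a5*a4*a3
        + 12*a5^2*a2 + 1*a5^4 + 12*a6*a3^2 + 24*a6*a4*a2 + 24*a6*a5*a1 + 12*a6*a5^2*a4
        + 6*a6^2*a4^2 + 12*a6^2*a5*a3 + 4*a6^3*a2 := by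
    rw [conv]; simp only [Finset.sum_range_succ, Finset.sum_range_zero, Nat.reduceSub, Nat.sub_zero, Nat.sub_self,
      v0, v1, v2, v3, v4, v5, v6, v7, v8, v9, v10, v11, v12]; ring
  have z13 : ((U * U) * (U * U)).coeff 13 = 12*a2*a1 + 12*a4^2*a3 + 12*a5*a3^2 + 24*a5*a4*a2
        + 12*a5^2*a1 + 4*a5^3*a4 + 24*a6*a3*a2 + 24*a6*a4*a1 + 12*a6*a5*a4^2 + 12*a6*a5^2*a3
        + 12*a6^2*a4*a3 + 12*a6^2*a5*a2 + 4*a6^3*a1 := by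
    rw [conv]; simp only [Finset.sum_range_succ, Finset.sum_range_zero, Nat.reduceSub, Nat.sub_zero, Nat.sub_self,
      v0, v1, v2, v3, v4, v5, v6, v7, v8, v9, v10, v11, v12, v13]; ring
  have z14 : ((U * U) * (U * U)).coeff 14 = 6*a1^2 + 12*a4*a3^2 + 12*a4^2*a2 + 24*a5*a3*a2
        + 24*a5*a4*a1 + 6*a5^2*a4^2 + 4*a5^3*a3 + 12*a6*a2^2 + 24*a6*a3*a1 + 4*a6*a4^3
        + 24*a6*a5*a4*a3 + 12*a6*a5^2*a2 + 6*a6^2*a3^2 + 12*a6^2*a4*a2 + 12*a6^2*a5*a1 := by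
    rw [conv]; simp only [Finset.sum_range_succ, Finset.sum_range_zero, Nat.reduceSub, Nat.sub_zero, Nat.sub_self,
      v0, v1, v2, v3, v4, v5, v6, v7, v8, v9, v10, v11, v12, v13, v14]; ring
  constructor
  · rw [show U ^ 6 = (U * U) * (U * U) * (U * U) by ring, conv]
    simp only [Finset.sum_range_succ, Finset.sum_range_zero, Nat.reduceSub, Nat.sub_zero, Nat.sub_self,
      v0, v1, v2, v3, v4, v5, v6, z0, z1, z2, z3, z4, z5, z6]; ring
  · rw [show U ^ 7 = (U * U) * (U * U) * (U * U * U) by ring, conv]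
    simp only [Finset.sum_range_succ, Finset.sum_range_zero, Nat.reduceSub, Nat.sub_zero, Nat.sub_self,
      w0, w1, w2, w3, w4, w5, w6, w7, w8, w9, w10, w11, w12, w13, w14, z0, z1, z2, z3, z4, z5, z6, z7, z8, z9, z10, z11, z12, z13, z14]; ring

theorem sum_pow_zmod : ∀ i < 84, ∑ x : ZMod 43, x ^ i = if i = 42 then -1 else 0 := by
  decide +kernel

open Polynomial in
theorem sum_eval (p : (ZMod 43)[X]) (hp : p.natDegree < 84) :
    ∑ x : ZMod 43, p.eval x = - p.coeff 42 := by
  simp_rw [eval_eq_sum_range' hp]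
  rw [Finset.sum_comm]
  simp_rw [← Finset.mul_sum]
  rw [Finset.sum_congr rfl (g := fun i => if i = 42 then - p.coeff i else 0)]
  · simp
  · intro i hi
    rw [sum_pow_zmod i (Finset.mem_range.mp hi)]
    split_ifs <;> simp

open Polynomial in
theorem reflect_pow (p : (ZMod 43)[X]) (hp : p.natDegree ≤ 8) (k : ℕ) :
    reflect (8 * k) (p ^ k) = (reflect 8 p) ^ k := by
  induction k with
  | zero => simp
  | succ k ih =>
    rw [pow_succ, pow_succ, ← ih, Nat.mul_succ]
    refine reflect_mul _ _ ?_ hp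
    exact (natDegree_pow_le_of_le k hp).trans (by omega)

open Polynomial in
theorem hermite (p : (ZMod 43)[X]) (hp : p.natDegree ≤ 8)
    (hb : Function.Bijective fun x : ZMod 43 => p.eval x) (k : ℕ) (hk0 : k < 10) :
    (p ^ k).coeff 42 = 0 := by
  have h1 := sum_eval (p ^ k) (lt_of_le_of_lt (natDegree_pow_le_of_le k hp) (by omega))
  simp only [eval_pow] at h1
  have h2 := hb.sum_comp (fun y : ZMod 43 => y ^ k)

  rw [h2, sum_pow_zmod k (by omega), if_neg (by omega)] at h1
  exact neg_eq_zero.mp h1.symm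

open Polynomial in
theorem no_normal (a6 a5 a4 a3 a2 a1 : ZMod 43)
    (hinj : Function.Injective fun x : ZMod 43 =>
      x ^ 8 + a6 * x ^ 6 + a5 * x ^ 5 + a4 * x ^ 4 + a3 * x ^ 3 + a2 * x ^ 2 + a1 * x)
    (hc : checkPair a6.val a5.val = true) : False := by
  have p43 : (43 : ZMod 43) = 0 := by decide
  obtain ⟨p, hp⟩ : ∃ p : (ZMod 43)[X], p = X ^ 8 + C a6 * X ^ 6 + C a5 * X ^ 5 + C a4 * X ^ 4
      + C a3 * X ^ 3 + C a2 * X ^ 2 + C a1 * X ^ 1 := ⟨_, rfl⟩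
  have hd : p.natDegree ≤ 8 := by rw [hp]; compute_degree
  have hb : Function.Bijective fun x : ZMod 43 => p.eval x := by
    rw [← Finite.injective_iff_bijective]
    have : (fun x : ZMod 43 => p.eval x) = fun x : ZMod 43 =>
      x ^ 8 + a6 * x ^ 6 + a5 * x ^ 5 + a4 * x ^ 4 + a3 * x ^ 3 + a2 * x ^ 2 + a1 * x := by
      funext x; rw [hp]; simp
    rw [this]; exact hinj
  have hU : reflect 8 p = 1 + C a6 * X ^ 2 + C a5 * X ^ 3
      + C a4 * X ^ 4 + C a3 * X ^ 5 + C a2 * X ^ 6 + C a1 * X ^ 7 := by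
    rw [hp]
    have h8 : reflect 8 (X ^ 8 : (ZMod 43)[X]) = 1 := by
      rw [← one_mul (X ^ 8), ← C_1, reflect_C_mul_X_pow]; simp [revAt_le]
    simp only [reflect_add, reflect_C_mul_X_pow, h8]
    simp [revAt_le]
  obtain ⟨h6, h7⟩ := coeff_formulas a6 a5 a4 a3 a2 a1 _ hU
  rw [← reflect_pow p hd, coeff_reflect] at h6 h7
  have r6 : revAt (8 * 6) 6 = 42 := by simp [revAt_le]
  have r7 : revAt (8 * 7) 14 = 42 := by simp [revAt_le]
  rw [r6, hermite p hd hb 6 (by omega)] at h6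
  rw [r7, hermite p hd hb 7 (by omega)] at h7
  refine check_sound a6 a5 a4 a3 a2 a1 hinj ?_ ?_ hc
  · linear_combination 7 * h6 + (a2 + 4 * a6 * a4 + 2 * a5 ^ 2 + 3 * a6 ^ 3) * p43
  · linear_combination -h7 - (2*a4*a3^2 + 2*a4^2*a2 + 4*a5*a3*a2 + 4*a5*a4*a1 + 4*a5^2*a4^2
        + 3*a5^3*a3 + 2*a6*a2^2 + 4*a6*a3*a1 + 3*a6*a4^3 + 19*a6*a5*a4*a3 + 9*a6*a5^2*a2
        + 2*a6*a5^4 + 4*a6^2*a3^2 + 9*a6^2*a4*a2 + 9*a6^2*a5*a1 + 14*a6^2*a5^2*a4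
        + 4*a6^3*a4^2 + 9*a6^3*a5*a3 + 2*a6^4*a2 + 2*a6^4*a5^2) * p43

theorem check_one_0 : checkPair 1 0 = true := by decide +kernel
theorem check_one_1 : checkPair 1 1 = true := by decide +kernel
theorem check_one_2 : checkPair 1 2 = true := by decide +kernel
theorem check_one_3 : checkPair 1 3 = true := by decide +kernel
theorem check_one_4 : checkPair 1 4 = true := by decide +kernel
theorem check_one_5 : checkPair 1 5 = true := by decide +kernel
theorem check_one_6 : checkPair 1 6 = true := by decide +kernel
theorem check_one_7 : checkPair 1 7 = true := by decide +kernel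
theorem check_one_8 : checkPair 1 8 = true := by decide +kernel
theorem check_one_9 : checkPair 1 9 = true := by decide +kernel
theorem check_one_10 : checkPair 1 10 = true := by decide +kernel
theorem check_one_11 : checkPair 1 11 = true := by decide +kernel
theorem check_one_12 : checkPair 1 12 = true := by decide +kernel
theorem check_one_13 : checkPair 1 13 = true := by decide +kernel
theorem check_one_14 : checkPair 1 14 = true := by decide +kernel
theorem check_one_15 : checkPair 1 15 = true := by decide +kernel
theorem check_one_16 : checkPair 1 16 = true := by decide +kernel
theorem check_one_17 : checkPair 1 17 = true := by decide +kernel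
theorem check_one_18 : checkPair 1 18 = true := by decide +kernel
theorem check_one_19 : checkPair 1 19 = true := by decide +kernel
theorem check_one_20 : checkPair 1 20 = true := by decide +kernel
theorem check_one_21 : checkPair 1 21 = true := by decide +kernel
theorem check_neg_0 : checkPair 42 0 = true := by decide +kernel
theorem check_neg_1 : checkPair 42 1 = true := by decide +kernel
theorem check_neg_2 : checkPair 42 2 = true := by decide +kernel
theorem check_neg_3 : checkPair 42 3 = true := by decide +kernel
theorem check_neg_4 : checkPair 42 4 = true := by decide +kernel
theorem check_neg_5 : checkPair 42 5 = true := by decide +kernel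
theorem check_neg_6 : checkPair 42 6 = true := by decide +kernel
theorem check_neg_7 : checkPair 42 7 = true := by decide +kernel
theorem check_neg_8 : checkPair 42 8 = true := by decide +kernel
theorem check_neg_9 : checkPair 42 9 = true := by decide +kernel
theorem check_neg_10 : checkPair 42 10 = true := by decide +kernel
theorem check_neg_11 : checkPair 42 11 = true := by decide +kernel
theorem check_neg_12 : checkPair 42 12 = true := by decide +kernel
theorem check_neg_13 : checkPair 42 13 = true := by decide +kernel
theorem check_neg_14 : checkPair 42 14 = true := by decide +kernel
theorem check_neg_15 : checkPair 42 15 = true := by decide +kernel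
theorem check_neg_16 : checkPair 42 16 = true := by decide +kernel
theorem check_neg_17 : checkPair 42 17 = true := by decide +kernel
theorem check_neg_18 : checkPair 42 18 = true := by decide +kernel
theorem check_neg_19 : checkPair 42 19 = true := by decide +kernel
theorem check_neg_20 : checkPair 42 20 = true := by decide +kernel
theorem check_neg_21 : checkPair 42 21 = true := by decide +kernel
theorem check_zer_0 : checkPair 0 0 = true := by decide +kernel
theorem check_zer_1 : checkPair 0 1 = true := by decide +kernel
theorem check_zer_3 : checkPair 0 3 = true := by decide +kernel
theorem check_zer_7 : checkPair 0 7 = true := by decide +kernel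

theorem check_one (v : ℕ) (hv : v < 22) : checkPair 1 v = true := by
  interval_cases v
  · exact check_one_0
  · exact check_one_1
  · exact check_one_2
  · exact check_one_3
  · exact check_one_4
  · exact check_one_5
  · exact check_one_6
  · exact check_one_7
  · exact check_one_8
  · exact check_one_9
  · exact check_one_10
  · exact check_one_11
  · exact check_one_12
  · exact check_one_13
  · exact check_one_14
  · exact check_one_15
  · exact check_one_16
  · exact check_one_17
  · exact check_one_18
  · exact check_one_19
  · exact check_one_20
  · exact check_one_21

theorem check_neg (v : ℕ) (hv : v < 22) : checkPair 42 v = true := by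
  interval_cases v
  · exact check_neg_0
  · exact check_neg_1
  · exact check_neg_2
  · exact check_neg_3
  · exact check_neg_4
  · exact check_neg_5
  · exact check_neg_6
  · exact check_neg_7
  · exact check_neg_8
  · exact check_neg_9
  · exact check_neg_10
  · exact check_neg_11
  · exact check_neg_12
  · exact check_neg_13
  · exact check_neg_14
  · exact check_neg_15
  · exact check_neg_16
  · exact check_neg_17
  · exact check_neg_18
  · exact check_neg_19
  · exact check_neg_20
  · exact check_neg_21

theorem scale6 : ∀ a : ZMod 43, a ≠ 0 → ∃ d : ZMod 43, d ≠ 0 ∧ (a * d ^ 2 = 1 ∨ a * d ^ 2 = 42) := by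
  decide +kernel

theorem scale5 : ∀ a : ZMod 43, ∃ d : ZMod 43, d ≠ 0 ∧
    (a * d ^ 3 = 0 ∨ a * d ^ 3 = 1 ∨ a * d ^ 3 = 3 ∨ a * d ^ 3 = 7) := by
  decide +kernel

theorem sign5 : ∀ a : ZMod 43, a.val < 22 ∨ (-a).val < 22 := by
  decide +kernel

theorem exists_scale (a6 a5 : ZMod 43) :
    ∃ d : ZMod 43, d ≠ 0 ∧ checkPair (a6 * d ^ 2).val (a5 * d ^ 3).val = true := by
  by_cases h : a6 = 0
  · obtain ⟨d, hd, h5⟩ := scale5 a5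
    refine ⟨d, hd, ?_⟩
    rw [h, zero_mul]
    rcases h5 with h5 | h5 | h5 | h5 <;> rw [h5]
    · exact check_zer_0
    · exact check_zer_1
    · exact check_zer_3
    · exact check_zer_7
  · obtain ⟨d, hd, h6⟩ := scale6 a6 h
    have key : ∀ v : ℕ, v < 22 → checkPair (a6 * d ^ 2).val v = true := by
      intro v hv
      rcases h6 with h6 | h6 <;> rw [h6]
      · exact check_one v hv
      · exact check_neg v hv
    rcases sign5 (a5 * d ^ 3) with h5 | h5
    · exact ⟨d, hd, key _ h5⟩
    · refine ⟨-d, neg_ne_zero.mpr hd, ?_⟩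
      rw [show a6 * (-d) ^ 2 = a6 * d ^ 2 by ring, show a5 * (-d) ^ 3 = -(a5 * d ^ 3) by ring]
      exact key _ h5

theorem eight_ne_zero : (8 : ZMod 43) ≠ 0 := by decide

theorem no_centered [Fact (Nat.Prime 43)] (a6 a5 a4 a3 a2 a1 : ZMod 43)
    (hinj : Function.Injective fun x : ZMod 43 =>
      x ^ 8 + a6 * x ^ 6 + a5 * x ^ 5 + a4 * x ^ 4 + a3 * x ^ 3 + a2 * x ^ 2 + a1 * x) : False := by
  obtain ⟨d, hd, hc⟩ := exists_scale a6 a5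
  refine no_normal (a6 * d ^ 2) (a5 * d ^ 3) (a4 * d ^ 4) (a3 * d ^ 5) (a2 * d ^ 6) (a1 * d ^ 7)
    ?_ hc
  have e : ∀ x : ZMod 43, x ^ 8 + a6 * d ^ 2 * x ^ 6 + a5 * d ^ 3 * x ^ 5 + a4 * d ^ 4 * x ^ 4
      + a3 * d ^ 5 * x ^ 3 + a2 * d ^ 6 * x ^ 2 + a1 * d ^ 7 * x =
      d ^ 8 * ((x * d⁻¹) ^ 8 + a6 * (x * d⁻¹) ^ 6 + a5 * (x * d⁻¹) ^ 5 + a4 * (x * d⁻¹) ^ 4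
        + a3 * (x * d⁻¹) ^ 3 + a2 * (x * d⁻¹) ^ 2 + a1 * (x * d⁻¹)) := by
    intro x; field_simp
  intro x y hxy
  simp only [e] at hxy
  have h := hinj (mul_left_cancel₀ (pow_ne_zero 8 hd) hxy)
  exact mul_right_cancel₀ (inv_ne_zero hd) h

theorem no_general [Fact (Nat.Prime 43)] (f0 f1 f2 f3 f4 f5 f6 f7 f8 : ZMod 43) (h8 : f8 ≠ 0)
    (hinj : Function.Injective fun x : ZMod 43 =>
      f0 + f1 * x + f2 * x ^ 2 + f3 * x ^ 3 + f4 * x ^ 4 + f5 * x ^ 5 + f6 * x ^ 6 + f7 * x ^ 7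
        + f8 * x ^ 8) : False := by
  obtain ⟨t, ht⟩ : ∃ t : ZMod 43, 8 * f8 * t + f7 = 0 := by
    have : (8 : ZMod 43) ≠ 0 := eight_ne_zero
    exact ⟨-f7 / (8 * f8), by field_simp; ring⟩
  have hi : f8 * f8⁻¹ = 1 := mul_inv_cancel₀ h8
  apply no_centered
    (f8⁻¹ * (f6 + 7 * f7 * t + 28 * f8 * t ^ 2))
    (f8⁻¹ * (f5 + 6 * f6 * t + 21 * f7 * t ^ 2 + 56 * f8 * t ^ 3))
    (f8⁻¹ * (f4 + 5 * f5 * t + 15 * f6 * t ^ 2 + 35 * f7 * t ^ 3 + 70 * f8 * t ^ 4))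
    (f8⁻¹ * (f3 + 4 * f4 * t + 10 * f5 * t ^ 2 + 20 * f6 * t ^ 3 + 35 * f7 * t ^ 4
      + 56 * f8 * t ^ 5))
    (f8⁻¹ * (f2 + 3 * f3 * t + 6 * f4 * t ^ 2 + 10 * f5 * t ^ 3 + 15 * f6 * t ^ 4
      + 21 * f7 * t ^ 5 + 28 * f8 * t ^ 6))
    (f8⁻¹ * (f1 + 2 * f2 * t + 3 * f3 * t ^ 2 + 4 * f4 * t ^ 3 + 5 * f5 * t ^ 4 + 6 * f6 * t ^ 5
      + 7 * f7 * t ^ 6 + 8 * f8 * t ^ 7))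
  intro x y hxy
  have e : ∀ z : ZMod 43, f0 + f1 * (z + t) + f2 * (z + t) ^ 2 + f3 * (z + t) ^ 3
      + f4 * (z + t) ^ 4 + f5 * (z + t) ^ 5 + f6 * (z + t) ^ 6 + f7 * (z + t) ^ 7
      + f8 * (z + t) ^ 8 =
      f8 * (z ^ 8 + f8⁻¹ * (f6 + 7 * f7 * t + 28 * f8 * t ^ 2) * z ^ 6
      + f8⁻¹ * (f5 + 6 * f6 * t + 21 * f7 * t ^ 2 + 56 * f8 * t ^ 3) * z ^ 5
      + f8⁻¹ * (f4 + 5 * f5 * t + 15 * f6 * t ^ 2 + 35 * f7 * t ^ 3 + 70 * f8 * t ^ 4) * z ^ 4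
      + f8⁻¹ * (f3 + 4 * f4 * t + 10 * f5 * t ^ 2 + 20 * f6 * t ^ 3 + 35 * f7 * t ^ 4
        + 56 * f8 * t ^ 5) * z ^ 3
      + f8⁻¹ * (f2 + 3 * f3 * t + 6 * f4 * t ^ 2 + 10 * f5 * t ^ 3 + 15 * f6 * t ^ 4
        + 21 * f7 * t ^ 5 + 28 * f8 * t ^ 6) * z ^ 2
      + f8⁻¹ * (f1 + 2 * f2 * t + 3 * f3 * t ^ 2 + 4 * f4 * t ^ 3 + 5 * f5 * t ^ 4
        + 6 * f6 * t ^ 5 + 7 * f7 * t ^ 6 + 8 * f8 * t ^ 7) * z)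
      + (f0 + f1 * t + f2 * t ^ 2 + f3 * t ^ 3 + f4 * t ^ 4 + f5 * t ^ 5 + f6 * t ^ 6
        + f7 * t ^ 7 + f8 * t ^ 8) := by
    intro z
    simp only [mul_add f8, ← mul_assoc, hi, one_mul]
    linear_combination z ^ 7 * ht
  have h : x + t = y + t := by
    apply hinj
    simp only [e]
    simp only at hxy
    rw [hxy]
  exact add_right_cancel h

end

end PP43

theorem no_pp_deg8_F43 (f : Polynomial (ZMod 43)) (hdeg : f.natDegree = 8) :
    ¬ Function.Bijective (fun a : ZMod 43 => f.eval a) := by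
  intro hb
  have hF : Fact (Nat.Prime 43) := ⟨by norm_num⟩
  refine PP43.no_general (f.coeff 0) (f.coeff 1) (f.coeff 2) (f.coeff 3) (f.coeff 4) (f.coeff 5)
    (f.coeff 6) (f.coeff 7) (f.coeff 8) ?_ ?_
  · intro h
    have h0 : f = 0 := by
      rw [← Polynomial.leadingCoeff_eq_zero, Polynomial.leadingCoeff, hdeg, h]
    rw [h0] at hdeg
    simp at hdeg
  · have e : (fun x : ZMod 43 => f.eval x) = fun x : ZMod 43 => f.coeff 0 + f.coeff 1 * x
        + f.coeff 2 * x ^ 2 + f.coeff 3 * x ^ 3 + f.coeff 4 * x ^ 4 + f.coeff 5 * x ^ 5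
        + f.coeff 6 * x ^ 6 + f.coeff 7 * x ^ 7 + f.coeff 8 * x ^ 8 := by
      funext x
      rw [Polynomial.eval_eq_sum_range' (n := 9) (by omega)]
      simp [Finset.sum_range_succ]
    rw [← e]
    exact hb.injective
end
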